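/- Let Z ∈ L^∞_T and (X_s) ∈ 𝓐_{1,t}(Z). Then (X_s) attains the essential supremum esssup_{(Y_s)∈𝓐_{1,t}(Z)} Σ_{s=t}^T E[u_s(Y_s) | 𝓕_t] if and only if the process (u_s'(X_s))_{s=t,…,T} is a martingale with respect to (𝓕_s). -/

import Mathlib

open MeasureTheory Filter

variable {Ω : Type*}

/-- `X ∈ L^∞(m)`: `m`-measurable and (essentially) bounded. -/
def MeasBdd (m : MeasurableSpace Ω) (X : Ω → ℝ) : Prop :=
  Measurable[m] X ∧ ∃ C : ℝ, ∀ ω, |X ω| ≤ C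

/-- `u` is a utility function (strictly increasing, strictly concave, `C¹`) with
derivative `u'` satisfying `u 0 = 0`, `u' 0 = 1`, `u'(+∞) = 0`, `u'(-∞) = +∞`. -/
structure IsUtility (u u' : ℝ → ℝ) : Prop where
  strictMono : StrictMono u
  strictConcave : StrictConcaveOn ℝ Set.univ u
  hasDeriv : ∀ x, HasDerivAt u (u' x) x
  derivCont : Continuous u'
  zero : u 0 = 0
  deriv_zero : u' 0 = 1
  deriv_top : Tendsto u' atTop (nhds 0)
  deriv_bot : Tendsto u' atBot atTop

/-- A one-product diversification of `Z` at time `t`: an adapted family `(X s)`,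
`s = t,…,T`, of essentially bounded random variables summing to `Z`. -/
def IsDiv1 {m0 : MeasurableSpace Ω} (P : Measure Ω) (ℱ : Filtration ℕ m0)
    (t T : ℕ) (Z : Ω → ℝ) (X : ℕ → Ω → ℝ) : Prop :=
  (∀ s ∈ Finset.Icc t T, MeasBdd (ℱ s) (X s)) ∧
  ∀ᵐ ω ∂P, (∑ s ∈ Finset.Icc t T, X s ω) = Z ω

/-- The total conditional expected utility `∑_{s=t}^T E[u_s(X_s) | 𝓕_t]`. -/
noncomputable def utilSum1 {m0 : MeasurableSpace Ω} (P : Measure Ω) (ℱ : Filtration ℕ m0)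
    (u : ℕ → ℝ → ℝ) (t T : ℕ) (X : ℕ → Ω → ℝ) : Ω → ℝ :=
  fun ω => ∑ s ∈ Finset.Icc t T, (P[fun ω' => u s (X s ω') | ℱ t]) ω

/-!
`𝓐_{1,t}(Z)` is an affine space directed by `𝓐_{1,t}(0)`. If `X` is a maximizer, then for every
direction `D ∈ 𝓐_{1,t}(0)` the function `e ↦ ∑ E[u_s(X_s + e D_s)]` is maximal at `e = 0`, so its
derivative `E[∑ u_s'(X_s) D_s]` vanishes there; transferring `1_A`, `A ∈ 𝓕_r`, from time `s` to time
`r ≤ s` turns this into the martingale property. Conversely, the tangent-line inequality for `u_s`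
reduces maximality to `∑ E[u_s'(X_s) D_s | 𝓕_t] = 0` with `D = Y - X`, and the martingale property
replaces every `u_s'(X_s)` by `u_T'(X_T)`, which then multiplies `∑ D_s = 0`.
-/

section RealFunctions

/-- Boundedness on bounded sets: with measurability, this is what composition with `f` needs in
order to preserve `MeasBdd`. -/
def BddOnBdd (f : ℝ → ℝ) : Prop :=
  ∀ C : ℝ, ∃ K : ℝ, ∀ x, |x| ≤ C → |f x| ≤ K

variable {f f' : ℝ → ℝ}

theorem bddOnBdd_of_continuous (hf : Continuous f) : BddOnBdd f := fun C =>
  have ⟨K, hK⟩ := (isCompact_Icc (a := -C) (b := C)).exists_bound_of_continuousOn hf.continuousOn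
  ⟨K, fun x hx => hK x (abs_le.1 hx)⟩

theorem bddOnBdd_of_antitone (hf : Antitone f) : BddOnBdd f := fun C =>
  ⟨max |f C| |f (-C)|, fun _ hx =>
    abs_le_max_abs_abs (hf (abs_le.1 hx).2) (hf (abs_le.1 hx).1)⟩

theorem continuous_of_forall_hasDerivAt (hf : ∀ x, HasDerivAt f (f' x) x) : Continuous f :=
  continuous_iff_continuousAt.2 fun x => (hf x).continuousAt

theorem measurable_of_forall_hasDerivAt (hf : ∀ x, HasDerivAt f (f' x) x) : Measurable f' := by
  have hderiv : deriv f = f' := funext fun x => (hf x).deriv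
  exact hderiv ▸ measurable_deriv f

theorem antitone_of_concaveOn_of_hasDerivAt (hconc : ConcaveOn ℝ Set.univ f)
    (hf : ∀ x, HasDerivAt f (f' x) x) : Antitone f' := by
  have hderiv : deriv f = f' := funext fun x => (hf x).deriv
  rw [← hderiv, ← antitoneOn_univ]
  exact hconc.antitoneOn_deriv fun x _ => (hf x).differentiableAt

theorem le_tangent_of_concaveOn_of_hasDerivAt {s : Set ℝ} {x y d : ℝ} (hconc : ConcaveOn ℝ s f)
    (hx : x ∈ s) (hy : y ∈ s) (hf : HasDerivAt f d x) : f y ≤ f x + d * (y - x) := by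
  rcases lt_trichotomy x y with hxy | rfl | hyx
  · have hslope := hconc.slope_le_of_hasDerivAt hx hy hxy hf
    rw [slope_def_field, div_le_iff₀ (sub_pos.2 hxy)] at hslope
    linarith
  · simp
  · have hslope := hconc.le_slope_of_hasDerivAt hy hx hyx hf
    rw [slope_def_field, le_div_iff₀ (sub_pos.2 hyx)] at hslope
    linarith

end RealFunctions

namespace MeasBdd

variable {m m' : MeasurableSpace Ω} {X Y : Ω → ℝ}

theorem mono (hX : MeasBdd m X) (h : m ≤ m') : MeasBdd m' X :=
  ⟨hX.1.mono h le_rfl, hX.2⟩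

theorem const (m : MeasurableSpace Ω) (c : ℝ) : MeasBdd m (fun _ => c) :=
  ⟨measurable_const, |c|, fun _ => le_rfl⟩

theorem comp {f : ℝ → ℝ} (hX : MeasBdd m X) (hf : Measurable f) (hbdd : BddOnBdd f) :
    MeasBdd m (fun ω => f (X ω)) := by
  obtain ⟨hmeas, C, hC⟩ := hX
  obtain ⟨K, hK⟩ := hbdd C
  exact ⟨hf.comp hmeas, K, fun ω => hK _ (hC ω)⟩

theorem add (hX : MeasBdd m X) (hY : MeasBdd m Y) : MeasBdd m (fun ω => X ω + Y ω) := by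
  obtain ⟨hXmeas, C, hC⟩ := hX
  obtain ⟨hYmeas, D, hD⟩ := hY
  exact ⟨hXmeas.add hYmeas, C + D, fun ω => (abs_add_le _ _).trans (add_le_add (hC ω) (hD ω))⟩

theorem mul (hX : MeasBdd m X) (hY : MeasBdd m Y) : MeasBdd m (fun ω => X ω * Y ω) := by
  obtain ⟨hXmeas, C, hC⟩ := hX
  obtain ⟨hYmeas, D, hD⟩ := hY
  refine ⟨hXmeas.mul hYmeas, C * D, fun ω => ?_⟩
  rw [abs_mul]
  exact mul_le_mul (hC ω) (hD ω) (abs_nonneg _) ((abs_nonneg _).trans (hC ω))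

theorem add_const_mul (hX : MeasBdd m X) (hY : MeasBdd m Y) (e : ℝ) :
    MeasBdd m (fun ω => X ω + e * Y ω) :=
  hX.add ((const m e).mul hY)

theorem indicator_one {A : Set Ω} (hA : MeasurableSet[m] A) : MeasBdd m (A.indicator 1) := by
  refine ⟨measurable_const.indicator hA, 1, fun ω => ?_⟩
  by_cases hω : ω ∈ A <;> simp [hω]

theorem integrable {m0 : MeasurableSpace Ω} {P : Measure Ω} [IsFiniteMeasure P]
    (hX : MeasBdd m X) (hm : m ≤ m0) : Integrable X P := by
  obtain ⟨hmeas, C, hC⟩ := hX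
  exact .of_bound (hmeas.mono hm le_rfl).aestronglyMeasurable C (.of_forall hC)

end MeasBdd

theorem hasDerivAt_integral_comp_add_mul {m0 : MeasurableSpace Ω} (P : Measure Ω)
    [IsFiniteMeasure P] {f f' : ℝ → ℝ} (hf : ∀ x, HasDerivAt f (f' x) x) (hbdd : BddOnBdd f')
    {X D : Ω → ℝ} (hX : MeasBdd m0 X) (hD : MeasBdd m0 D) :
    HasDerivAt (fun e : ℝ => ∫ ω, f (X ω + e * D ω) ∂P) (∫ ω, f' (X ω) * D ω ∂P) 0 := by
  obtain ⟨-, B, hB⟩ := id hX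
  obtain ⟨-, C, hC⟩ := id hD
  obtain ⟨K, hK⟩ := hbdd (B + C)
  have hcont : Continuous f := continuous_of_forall_hasDerivAt hf
  have hline (e : ℝ) : MeasBdd m0 (fun ω => f (X ω + e * D ω)) :=
    (hX.add_const_mul hD e).comp hcont.measurable (bddOnBdd_of_continuous hcont)
  have hline' : MeasBdd m0 (fun ω => f' (X ω + 0 * D ω) * D ω) :=
    ((hX.add_const_mul hD 0).comp (measurable_of_forall_hasDerivAt hf) hbdd).mul hD
  have hbound (ω : Ω) (e : ℝ) (he : e ∈ Metric.ball (0 : ℝ) 1) :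
      ‖f' (X ω + e * D ω) * D ω‖ ≤ K * C := by
    have he1 : |e| ≤ 1 := (mem_ball_zero_iff.1 he).le
    have hstep : |e * D ω| ≤ C := by
      rw [abs_mul]
      exact (mul_le_of_le_one_left (abs_nonneg _) he1).trans (hC ω)
    have hK' := hK _ ((abs_add_le _ _).trans (add_le_add (hB ω) hstep))
    rw [norm_mul]
    exact mul_le_mul hK' (hC ω) (norm_nonneg _) ((abs_nonneg _).trans hK')
  have hdiff (ω : Ω) (e : ℝ) :
      HasDerivAt (fun e => f (X ω + e * D ω)) (f' (X ω + e * D ω) * D ω) e := by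
    have hinner : HasDerivAt (fun e : ℝ => X ω + e * D ω) (D ω) e := by
      simpa using ((hasDerivAt_id e).mul_const (D ω)).const_add (X ω)
    exact (hf _).comp e hinner
  simpa using (hasDerivAt_integral_of_dominated_loc_of_deriv_le (μ := P)
    (Metric.ball_mem_nhds 0 one_pos) (.of_forall fun e => (hline e).1.aestronglyMeasurable)
    ((hline 0).integrable le_rfl) hline'.1.aestronglyMeasurable (.of_forall hbound)
    (integrable_const _) (.of_forall fun ω e _ => hdiff ω e)).2

section Diversification

variable {m0 : MeasurableSpace Ω} {P : Measure Ω} {ℱ : Filtration ℕ m0} {t T : ℕ}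
  {Z W : Ω → ℝ} {X Y D : ℕ → Ω → ℝ} {u u' : ℕ → ℝ → ℝ}

theorem IsDiv1.add_const_mul (hX : IsDiv1 P ℱ t T Z X) (hY : IsDiv1 P ℱ t T W Y) (e : ℝ) :
    IsDiv1 P ℱ t T (fun ω => Z ω + e * W ω) (fun s ω => X s ω + e * Y s ω) := by
  refine ⟨fun s hs => (hX.1 s hs).add_const_mul (hY.1 s hs) e, ?_⟩
  filter_upwards [hX.2, hY.2] with ω hXω hYω
  rw [Finset.sum_add_distrib, ← Finset.mul_sum, hXω, hYω]

theorem IsDiv1.sub (hX : IsDiv1 P ℱ t T Z X) (hY : IsDiv1 P ℱ t T W Y) :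
    IsDiv1 P ℱ t T (Z - W) (X - Y) := by
  convert hX.add_const_mul hY (-1) using 1 <;> ext <;> simp [sub_eq_add_neg]

theorem IsDiv1.single {H : Ω → ℝ} {s : ℕ} (hH : MeasBdd (ℱ s) H) (hs : s ∈ Finset.Icc t T) :
    IsDiv1 P ℱ t T H (Pi.single s H) := by
  refine ⟨fun k _ => ?_, .of_forall fun ω => ?_⟩
  · obtain rfl | hks := eq_or_ne k s
    · simpa using hH
    · rw [Pi.single_eq_of_ne hks]
      exact .const (ℱ k) 0
  · rw [Finset.sum_eq_single_of_mem s hs fun k _ hks => by simp [hks], Pi.single_eq_same]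

theorem IsDiv1.single_sub_single {H : Ω → ℝ} {r s : ℕ} (hH : MeasBdd (ℱ r) H) (hrs : r ≤ s)
    (hr : r ∈ Finset.Icc t T) (hs : s ∈ Finset.Icc t T) :
    IsDiv1 P ℱ t T 0 (Pi.single r H - Pi.single s H) := by
  simpa only [sub_self] using
    (IsDiv1.single (P := P) hH hr).sub (.single (hH.mono (ℱ.mono hrs)) hs)

theorem sum_mul_single_sub_single {ι : Type*} [DecidableEq ι] {I : Finset ι} {i j : ι}
    (hi : i ∈ I) (hj : j ∈ I) (M : ι → Ω → ℝ) (H : Ω → ℝ) (ω : Ω) :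
    ∑ k ∈ I, M k ω * (Pi.single i H - Pi.single j H : ι → Ω → ℝ) k ω =
      (M i ω - M j ω) * H ω := by
  have hsingle (l : ι) (hl : l ∈ I) :
      ∑ k ∈ I, M k ω * (Pi.single l H : ι → Ω → ℝ) k ω = M l ω * H ω := by
    rw [Finset.sum_eq_single_of_mem l hl fun k _ hkl => by simp [hkl], Pi.single_eq_same]
  simp only [Pi.sub_apply, mul_sub, Finset.sum_sub_distrib, hsingle i hi, hsingle j hj, sub_mul]

theorem integrable_utilSum1 : Integrable (utilSum1 P ℱ u t T X) P :=
  integrable_finsetSum _ fun _ _ => integrable_condExp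

variable [IsFiniteMeasure P]

theorem condExp_ae_eq_of_forall_integral_sum_mul_eq_zero {M : ℕ → Ω → ℝ}
    (hM : ∀ s ∈ Finset.Icc t T, MeasBdd (ℱ s) (M s))
    (horth : ∀ D, IsDiv1 P ℱ t T 0 D → ∫ ω, ∑ s ∈ Finset.Icc t T, M s ω * D s ω ∂P = 0)
    {r s : ℕ} (hr : r ∈ Finset.Icc t T) (hs : s ∈ Finset.Icc t T) (hrs : r ≤ s) :
    P[M s | ℱ r] =ᵐ[P] M r := by
  have hintr : Integrable (M r) P := (hM r hr).integrable (ℱ.le r)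
  have hints : Integrable (M s) P := (hM s hs).integrable (ℱ.le s)
  refine (ae_eq_condExp_of_forall_setIntegral_eq (ℱ.le r) hints (fun _ _ _ => hintr.integrableOn)
    (fun A hA _ => ?_) (hM r hr).1.aestronglyMeasurable).symm
  rw [← sub_eq_zero, ← integral_sub hintr.integrableOn hints.integrableOn,
    ← integral_indicator (ℱ.le r A hA),
    ← horth _ (.single_sub_single (.indicator_one hA) hrs hr hs)]
  congr 1 with ω
  rw [sum_mul_single_sub_single hr hs]
  by_cases hω : ω ∈ A <;> simp [hω]

theorem sum_condExp_mul_ae_eq_zero {M : ℕ → Ω → ℝ} {ξ : Ω → ℝ} (hξ : Integrable ξ P)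
    (hM : ∀ s ∈ Finset.Icc t T, P[ξ | ℱ s] =ᵐ[P] M s) (hD : IsDiv1 P ℱ t T 0 D) :
    ∑ s ∈ Finset.Icc t T, P[fun ω => M s ω * D s ω | ℱ t] =ᵐ[P] 0 := by
  have hint (s : ℕ) (hs : s ∈ Finset.Icc t T) : Integrable (ξ * D s) P := by
    obtain ⟨hmeas, C, hC⟩ := hD.1 s hs
    exact hξ.mul_bdd (hmeas.mono (ℱ.le s) le_rfl).aestronglyMeasurable (.of_forall hC)
  have hclose (s : ℕ) (hs : s ∈ Finset.Icc t T) :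
      P[fun ω => M s ω * D s ω | ℱ t] =ᵐ[P] P[ξ * D s | ℱ t] :=
    have hpull : (fun ω => M s ω * D s ω) =ᵐ[P] P[ξ * D s | ℱ s] :=
      ((hM s hs).symm.mul .rfl).trans (condExp_mul_of_stronglyMeasurable_right
        (hD.1 s hs).1.stronglyMeasurable (hint s hs) hξ).symm
    (condExp_congr_ae hpull).trans
      (condExp_condExp_of_le (ℱ.mono (Finset.mem_Icc.1 hs).1) (ℱ.le s))
  have hsum : ∑ s ∈ Finset.Icc t T, ξ * D s =ᵐ[P] 0 := by
    filter_upwards [hD.2] with ω hω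
    simp [Finset.sum_apply, ← Finset.mul_sum, hω]
  calc ∑ s ∈ Finset.Icc t T, P[fun ω => M s ω * D s ω | ℱ t]
      =ᵐ[P] ∑ s ∈ Finset.Icc t T, P[ξ * D s | ℱ t] := eventuallyEq_sum hclose
    _ =ᵐ[P] P[∑ s ∈ Finset.Icc t T, ξ * D s | ℱ t] := (condExp_finsetSum hint (ℱ t)).symm
    _ =ᵐ[P] P[0 | ℱ t] := condExp_congr_ae hsum
    _ = 0 := condExp_zero

theorem integral_utilSum1 :
    ∫ ω, utilSum1 P ℱ u t T X ω ∂P = ∑ s ∈ Finset.Icc t T, ∫ ω, u s (X s ω) ∂P := by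
  unfold utilSum1
  rw [integral_finsetSum _ fun _ _ => integrable_condExp]
  exact Finset.sum_congr rfl fun _ _ => integral_condExp (ℱ.le t)

theorem integral_sum_deriv_mul_eq_zero_of_maximizer
    (hderiv : ∀ s ∈ Finset.Icc t T, ∀ x, HasDerivAt (u s) (u' s x) x)
    (hbdd : ∀ s ∈ Finset.Icc t T, BddOnBdd (u' s)) (hX : IsDiv1 P ℱ t T Z X)
    (hmax : ∀ Y, IsDiv1 P ℱ t T Z Y → utilSum1 P ℱ u t T Y ≤ᵐ[P] utilSum1 P ℱ u t T X)
    (hD : IsDiv1 P ℱ t T 0 D) :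
    ∫ ω, ∑ s ∈ Finset.Icc t T, u' s (X s ω) * D s ω ∂P = 0 := by
  let U (e : ℝ) : ℝ := ∑ s ∈ Finset.Icc t T, ∫ ω, u s (X s ω + e * D s ω) ∂P
  have hU : HasDerivAt U (∑ s ∈ Finset.Icc t T, ∫ ω, u' s (X s ω) * D s ω ∂P) 0 :=
    .fun_sum fun s hs => hasDerivAt_integral_comp_add_mul P (hderiv s hs) (hbdd s hs)
      ((hX.1 s hs).mono (ℱ.le s)) ((hD.1 s hs).mono (ℱ.le s))
  have hUmax : IsLocalMax U 0 := .of_forall fun e => by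
    have hY : IsDiv1 P ℱ t T Z (fun s ω => X s ω + e * D s ω) := by
      simpa using hX.add_const_mul hD e
    simpa [U, integral_utilSum1] using
      integral_mono_ae integrable_utilSum1 integrable_utilSum1 (hmax _ hY)
  have hint (s : ℕ) (hs : s ∈ Finset.Icc t T) :
      Integrable (fun ω => u' s (X s ω) * D s ω) P :=
    (((hX.1 s hs).comp (measurable_of_forall_hasDerivAt (hderiv s hs)) (hbdd s hs)).mul
      (hD.1 s hs)).integrable (ℱ.le s)
  rw [integral_finsetSum _ hint]
  exact hUmax.hasDerivAt_eq_zero hU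

theorem utilSum1_ae_le_add_sum_condExp_deriv_mul
    (hconc : ∀ s ∈ Finset.Icc t T, ConcaveOn ℝ Set.univ (u s))
    (hderiv : ∀ s ∈ Finset.Icc t T, ∀ x, HasDerivAt (u s) (u' s x) x)
    (hX : ∀ s ∈ Finset.Icc t T, MeasBdd (ℱ s) (X s))
    (hY : ∀ s ∈ Finset.Icc t T, MeasBdd (ℱ s) (Y s)) :
    utilSum1 P ℱ u t T Y ≤ᵐ[P] utilSum1 P ℱ u t T X +
      ∑ s ∈ Finset.Icc t T, P[fun ω => u' s (X s ω) * (Y s ω - X s ω) | ℱ t] := by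
  have htangent (s : ℕ) (hs : s ∈ Finset.Icc t T) :
      P[fun ω => u s (Y s ω) | ℱ t] ≤ᵐ[P] P[fun ω => u s (X s ω) | ℱ t] +
        P[fun ω => u' s (X s ω) * (Y s ω - X s ω) | ℱ t] := by
    have hcont := continuous_of_forall_hasDerivAt (hderiv s hs)
    have hanti := antitone_of_concaveOn_of_hasDerivAt (hconc s hs) (hderiv s hs)
    have hincr : MeasBdd (ℱ s) (fun ω => Y s ω - X s ω) := by
      simpa [sub_eq_add_neg] using (hY s hs).add_const_mul (hX s hs) (-1)
    have huX : Integrable (fun ω => u s (X s ω)) P :=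
      ((hX s hs).comp hcont.measurable (bddOnBdd_of_continuous hcont)).integrable (ℱ.le s)
    have huY : Integrable (fun ω => u s (Y s ω)) P :=
      ((hY s hs).comp hcont.measurable (bddOnBdd_of_continuous hcont)).integrable (ℱ.le s)
    have hlin : Integrable (fun ω => u' s (X s ω) * (Y s ω - X s ω)) P :=
      (((hX s hs).comp hanti.measurable (bddOnBdd_of_antitone hanti)).mul hincr).integrable
        (ℱ.le s)
    exact (condExp_mono huY (huX.add hlin) (.of_forall fun ω =>
      le_tangent_of_concaveOn_of_hasDerivAt (hconc s hs) (Set.mem_univ _) (Set.mem_univ _)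
        (hderiv s hs (X s ω)))).trans (condExp_add huX hlin (ℱ t)).le
  filter_upwards [(Finset.eventually_all _).2 htangent] with ω hω
  simpa [utilSum1, Finset.sum_add_distrib] using Finset.sum_le_sum hω

theorem one_dim_maximizer_iff_martingale_general (ht : t ≤ T)
    (hconc : ∀ s ∈ Finset.Icc t T, ConcaveOn ℝ Set.univ (u s))
    (hderiv : ∀ s ∈ Finset.Icc t T, ∀ x, HasDerivAt (u s) (u' s x) x)
    (hX : IsDiv1 P ℱ t T Z X) :
    (∀ Y : ℕ → Ω → ℝ, IsDiv1 P ℱ t T Z Y →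
      utilSum1 P ℱ u t T Y ≤ᵐ[P] utilSum1 P ℱ u t T X)
    ↔
    (∀ r ∈ Finset.Icc t T, ∀ s ∈ Finset.Icc t T, r ≤ s →
      (P[fun ω => u' s (X s ω) | ℱ r]) =ᵐ[P] fun ω => u' r (X r ω)) := by
  have hanti (s : ℕ) (hs : s ∈ Finset.Icc t T) : Antitone (u' s) :=
    antitone_of_concaveOn_of_hasDerivAt (hconc s hs) (hderiv s hs)
  have hmarg (s : ℕ) (hs : s ∈ Finset.Icc t T) : MeasBdd (ℱ s) (fun ω => u' s (X s ω)) :=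
    (hX.1 s hs).comp (hanti s hs).measurable (bddOnBdd_of_antitone (hanti s hs))
  constructor
  · intro hmax r hr s hs hrs
    refine condExp_ae_eq_of_forall_integral_sum_mul_eq_zero
      (M := fun s ω => u' s (X s ω)) hmarg (fun D hD => ?_) hr hs hrs
    exact integral_sum_deriv_mul_eq_zero_of_maximizer hderiv
      (fun s hs => bddOnBdd_of_antitone (hanti s hs)) hX hmax hD
  · intro hmart Y hY
    have hTmem : T ∈ Finset.Icc t T := Finset.right_mem_Icc.2 ht
    have hD : IsDiv1 P ℱ t T 0 (fun s ω => Y s ω - X s ω) := sub_self Z ▸ hY.sub hX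
    have hzero := sum_condExp_mul_ae_eq_zero ((hmarg T hTmem).integrable (ℱ.le T))
      (fun s hs => hmart s hs T hTmem (Finset.mem_Icc.1 hs).2) hD
    filter_upwards [utilSum1_ae_le_add_sum_condExp_deriv_mul hconc hderiv hX.1 hY.1, hzero]
      with ω hle hω
    simpa [hω] using hle

end Diversification

/-- Corollary 2.18: `(X_s) ∈ 𝓐_{1,t}(Z)` attains the essential supremum
`esssup_{(Y_s)} Σ_{s=t}^T E[u_s(Y_s)|𝓕_t]` iff `(u_s'(X_s))_{s=t,…,T}` is a martingale. -/
theorem one_dim_maximizer_iff_martingale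
    {m0 : MeasurableSpace Ω} (P : Measure Ω) [IsProbabilityMeasure P]
    (ℱ : Filtration ℕ m0) (T t : ℕ) (hT : 0 < T) (ht : t ≤ T)
    (u u' : ℕ → ℝ → ℝ) (hu : ∀ s, IsUtility (u s) (u' s))
    (Z : Ω → ℝ) (hZ : MeasBdd (ℱ T) Z)
    (X : ℕ → Ω → ℝ) (hX : IsDiv1 P ℱ t T Z X) :
    -- `X` attains the essential supremum …
    (∀ Y : ℕ → Ω → ℝ, IsDiv1 P ℱ t T Z Y →
      utilSum1 P ℱ u t T Y ≤ᵐ[P] utilSum1 P ℱ u t T X)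
    ↔
    -- … iff `(u_s'(X_s))_{s=t,…,T}` is a martingale w.r.t. `(ℱ s)`:
    (∀ r ∈ Finset.Icc t T, ∀ s ∈ Finset.Icc t T, r ≤ s →
      (P[fun ω => u' s (X s ω) | ℱ r]) =ᵐ[P] fun ω => u' r (X r ω)) :=
  one_dim_maximizer_iff_martingale_general ht (fun s _ => (hu s).strictConcave.concaveOn)
    (fun s _ => (hu s).hasDeriv) hX
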